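/- Let Γ be a thick generalised hexagon, and let x1, x2, x3 be a round-up triple of points of Γ such that x1 and x2 are collinear. Then x1, x2 and x3 are contained in a common line of Γ. -/

import Mathlib

/-- An incidence structure of points and lines, each line being a set of points. -/
structure GenHexagon where
  Point : Type
  Line : Type
  pts : Line → Set Point

namespace GenHexagon

variable (Γ : GenHexagon)

/-- Adjacency of the bipartite incidence graph on the disjoint union of points and lines:
a point is adjacent to a line iff the point lies on the line. -/
def incAdj : Γ.Point ⊕ Γ.Line → Γ.Point ⊕ Γ.Line → Prop
  | Sum.inl x, Sum.inr L => x ∈ Γ.pts L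
  | Sum.inr L, Sum.inl x => x ∈ Γ.pts L
  | _, _ => False

/-- The bipartite incidence graph. -/
def incGraph : SimpleGraph (Γ.Point ⊕ Γ.Line) where
  Adj := Γ.incAdj
  symm := ⟨by rintro (x | L) (y | M) h <;> simp_all [incAdj]⟩
  loopless := ⟨by rintro (x | L) h <;> simp_all [incAdj]⟩

/-- `Γ` is a generalised hexagon: its incidence graph has diameter `6` and girth `12`. -/
def IsGenHexagon : Prop :=
  Γ.incGraph.ediam = 6 ∧ Γ.incGraph.egirth = 12

/-- Two points are collinear if they are distinct and some line contains both. -/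
def Collinear (x y : Γ.Point) : Prop :=
  x ≠ y ∧ ∃ L, x ∈ Γ.pts L ∧ y ∈ Γ.pts L

/-- Two points are special if they are distinct, non-collinear, and collinear
to a common point. -/
def Special (x y : Γ.Point) : Prop :=
  x ≠ y ∧ ¬ Γ.Collinear x y ∧ ∃ z, Γ.Collinear x z ∧ Γ.Collinear y z

/-- Two points are opposite if they are distinct, non-collinear and non-special. -/
def Opposite (x y : Γ.Point) : Prop :=
  x ≠ y ∧ ¬ Γ.Collinear x y ∧ ¬ Γ.Special x y

/-- `Γ` has order `(s, t)`: every line contains exactly `s + 1` points and every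
point lies on exactly `t + 1` lines. -/
def HasOrder (s t : ℕ) : Prop :=
  (∀ L, (Γ.pts L).encard = s + 1) ∧ (∀ x, {L | x ∈ Γ.pts L}.encard = t + 1)

/-- `Γ` is thick: every line contains at least `3` points and every point lies on
at least `3` lines. -/
def Thick : Prop :=
  (∀ L, 3 ≤ (Γ.pts L).encard) ∧ (∀ x, 3 ≤ {L | x ∈ Γ.pts L}.encard)

/-- A point is close to a line if it is collinear to exactly one point of that line. -/
def CloseTo (x : Γ.Point) (L : Γ.Line) : Prop :=
  ∃! y, y ∈ Γ.pts L ∧ Γ.Collinear x y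

/-- Two lines are opposite if they are disjoint and no point of one is collinear to
a point of the other. -/
def OppLines (L M : Γ.Line) : Prop :=
  (∀ x ∈ Γ.pts L, x ∉ Γ.pts M) ∧
  (∀ x ∈ Γ.pts L, ∀ y ∈ Γ.pts M, ¬ Γ.Collinear x y)

/-- The distance-3 trace `[L,M]₃` of two (opposite) lines: the set of points close to
both `L` and `M`. -/
def trace3 (L M : Γ.Line) : Set Γ.Point :=
  {x | Γ.CloseTo x L ∧ Γ.CloseTo x M}

/-- The distance-3 trace `[L,M]₃` is regular if `[N,M]₃ = [L,M]₃` for every line `N`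
opposite `M` such that `[N,M]₃` and `[L,M]₃` share at least two points. -/
def RegularTrace3 (L M : Γ.Line) : Prop :=
  ∀ N, Γ.OppLines N M → (Γ.trace3 N M ∩ Γ.trace3 L M).Nontrivial →
    Γ.trace3 N M = Γ.trace3 L M

/-- A hyperbolic line: a set `H` of pairwise special points, all collinear to a common
point `p`, such that for every point `q` opposite `p` to which at least two points of `H`
are special, the set of points special to `q` and collinear to `p` equals `H`. -/
def IsHyperbolicLine (H : Set Γ.Point) : Prop :=
  (∀ x ∈ H, ∀ y ∈ H, x ≠ y → Γ.Special x y) ∧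
  ∃ p, (∀ x ∈ H, Γ.Collinear x p) ∧
    ∀ q, Γ.Opposite q p → {x ∈ H | Γ.Special q x}.Nontrivial →
      {x | Γ.Special q x ∧ Γ.Collinear x p} = H

/-- A round-up triple: no point of `Γ` is opposite exactly one of `x₁, x₂, x₃`. -/
def RoundUpTriple (x₁ x₂ x₃ : Γ.Point) : Prop :=
  ∀ y : Γ.Point,
    ¬ ((Γ.Opposite y x₁ ∧ ¬ Γ.Opposite y x₂ ∧ ¬ Γ.Opposite y x₃) ∨
       (¬ Γ.Opposite y x₁ ∧ Γ.Opposite y x₂ ∧ ¬ Γ.Opposite y x₃) ∨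
       (¬ Γ.Opposite y x₁ ∧ ¬ Γ.Opposite y x₂ ∧ Γ.Opposite y x₃))

/-- A geometric line: a set `T` of points such that each point of `Γ` is either opposite
no member of `T`, or non-opposite to exactly one member of `T`. -/
def IsGeometricLine (T : Set Γ.Point) : Prop :=
  ∀ y : Γ.Point, (∀ x ∈ T, ¬ Γ.Opposite y x) ∨ (∃! x, x ∈ T ∧ ¬ Γ.Opposite y x)

end GenHexagon

/-- Two paths with the same ends whose total length is less than the girth coincide. -/
theorem SimpleGraph.Walk.IsPath.eq_of_length_add_lt_egirth {V : Type*} {G : SimpleGraph V}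
    {u v : V} {p q : G.Walk u v} (hp : p.IsPath) (hq : q.IsPath)
    (h : ((p.length + q.length : ℕ) : ℕ∞) < G.egirth) : p = q := by
  classical
  let H : SimpleGraph V := SimpleGraph.fromEdgeSet {e | e ∈ p.edges ++ q.edges}
  have mem_H : ∀ e ∈ p.edges ++ q.edges, e ∈ G.edgeSet → e ∈ H.edgeSet := by
    intro e he heG
    rw [SimpleGraph.edgeSet_fromEdgeSet]
    exact ⟨he, fun hd => G.not_isDiag_of_mem_edgeSet heG hd⟩
  have hpH : ∀ e ∈ p.edges, e ∈ H.edgeSet := fun e he =>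
    mem_H e (List.mem_append_left _ he) (p.edges_subset_edgeSet he)
  have hqH : ∀ e ∈ q.edges, e ∈ H.edgeSet := fun e he =>
    mem_H e (List.mem_append_right _ he) (q.edges_subset_edgeSet he)
  have hac : H.IsAcyclic := by
    intro w c hc
    have hsub : c.edges ⊆ p.edges ++ q.edges := by
      intro e he
      have := c.edges_subset_edgeSet he
      rw [SimpleGraph.edgeSet_fromEdgeSet] at this
      exact this.1
    have hcG : ∀ e ∈ c.edges, e ∈ G.edgeSet := fun e he => by
      rcases List.mem_append.1 (hsub he) with h | h
      · exact p.edges_subset_edgeSet h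
      · exact q.edges_subset_edgeSet h
    have hlen : c.length ≤ p.length + q.length := by
      simpa using (hc.edges_nodup.subperm hsub).length_le
    have hg : G.egirth ≤ (c.transfer G hcG).length :=
      SimpleGraph.le_egirth.1 le_rfl _ _ (hc.transfer hcG)
    rw [SimpleGraph.Walk.length_transfer] at hg
    exact absurd (h.trans_le hg) (not_lt.2 (by exact_mod_cast hlen))
  have huniq := (hac.subsingleton_path u v).elim ⟨p.transfer H hpH, hp.transfer hpH⟩
    ⟨q.transfer H hqH, hq.transfer hqH⟩
  have hsupp := congrArg (fun r : H.Path u v => r.1.support) huniq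
  simp only [SimpleGraph.Walk.support_transfer] at hsupp
  exact SimpleGraph.Walk.ext_support hsupp

namespace GenHexagon

variable {Γ : GenHexagon} {x y z a b p q : Γ.Point} {K L M N : Γ.Line}

theorem incGraph_adj_inl_inr (h : x ∈ Γ.pts L) : Γ.incGraph.Adj (Sum.inl x) (Sum.inr L) := h

theorem incGraph_adj_inr_inl (h : x ∈ Γ.pts L) : Γ.incGraph.Adj (Sum.inr L) (Sum.inl x) := h

/-- In a generalised hexagon, paths of total length less than `12` with common ends have the
same vertices. -/
theorem IsGenHexagon.support_eq (hΓ : Γ.IsGenHexagon) {u v : Γ.Point ⊕ Γ.Line}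
    (p q : Γ.incGraph.Walk u v) (hp : p.support.Nodup) (hq : q.support.Nodup)
    (h : p.length + q.length < 12) : p.support = q.support := by
  have : ((p.length + q.length : ℕ) : ℕ∞) < Γ.incGraph.egirth := by
    rw [hΓ.2]
    exact_mod_cast h
  rw [SimpleGraph.Walk.IsPath.eq_of_length_add_lt_egirth
    (SimpleGraph.Walk.IsPath.mk' hp) (SimpleGraph.Walk.IsPath.mk' hq) this]

theorem Collinear.symm (h : Γ.Collinear x y) : Γ.Collinear y x :=
  ⟨h.1.symm, h.2.imp fun _ hL => hL.symm⟩

/-- Points that are not opposite are equal, collinear or special. -/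
theorem eq_or_collinear_or_special_of_not_opposite (h : ¬ Γ.Opposite x y) :
    x = y ∨ Γ.Collinear x y ∨ Γ.Special x y := by
  unfold Opposite at h
  tauto

/-- Special points are joined by two distinct lines. -/
theorem Special.exists_lines (h : Γ.Special x y) : ∃ z K M, Γ.Collinear x z ∧ Γ.Collinear z y ∧
    x ∈ Γ.pts K ∧ z ∈ Γ.pts K ∧ z ∈ Γ.pts M ∧ y ∈ Γ.pts M ∧ K ≠ M := by
  obtain ⟨hne, hnc, z, ⟨hxz, K, hxK, hzK⟩, ⟨hyz, M, hyM, hzM⟩⟩ := h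
  refine ⟨z, K, M, ⟨hxz, K, hxK, hzK⟩, ⟨hyz.symm, M, hzM, hyM⟩, hxK, hzK, hzM, hyM, ?_⟩
  rintro rfl
  exact hnc ⟨hne, K, hxK, hyM⟩

/-- A point on, or collinear to a point of, a line is opposite no point of that line. -/
theorem not_opposite_of_mem (hq : q ∈ Γ.pts L) (hx : x ∈ Γ.pts L) (hqN : q ∈ Γ.pts N)
    (hyN : y ∈ Γ.pts N) : ¬ Γ.Opposite y x := by
  rintro ⟨hne, hnc, hns⟩
  refine hns ⟨hne, hnc, q, ⟨?_, N, hyN, hqN⟩, ⟨?_, L, hx, hq⟩⟩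
  · rintro rfl
    exact hnc ⟨hne, L, hq, hx⟩
  · rintro rfl
    exact hnc ⟨hne, N, hyN, hqN⟩

/-- Two distinct points lie on at most one line. -/
theorem IsGenHexagon.line_unique (hΓ : Γ.IsGenHexagon) (hxy : x ≠ y) (hxL : x ∈ Γ.pts L)
    (hyL : y ∈ Γ.pts L) (hxM : x ∈ Γ.pts M) (hyM : y ∈ Γ.pts M) : L = M := by
  have := hΓ.support_eq
    (.cons (incGraph_adj_inl_inr hxL) (.cons (incGraph_adj_inr_inl hyL) .nil))
    (.cons (incGraph_adj_inl_inr hxM) (.cons (incGraph_adj_inr_inl hyM) .nil))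
    (by simp [hxy]) (by simp [hxy]) (by simp)
  simpa using this

/-- A point off a line is collinear to at most one of its points. -/
theorem IsGenHexagon.collinear_unique (hΓ : Γ.IsGenHexagon) (hx : x ∉ Γ.pts L)
    (ha : a ∈ Γ.pts L) (hb : b ∈ Γ.pts L) (hxa : Γ.Collinear x a) (hxb : Γ.Collinear x b) :
    a = b := by
  obtain ⟨hxa, M, hxM, haM⟩ := hxa
  obtain ⟨hxb, N, hxN, hbN⟩ := hxb
  have hML : M ≠ L := by rintro rfl; exact hx hxM
  have hNL : N ≠ L := by rintro rfl; exact hx hxN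
  have := hΓ.support_eq
    (.cons (incGraph_adj_inl_inr hxM) (.cons (incGraph_adj_inr_inl haM)
      (.cons (incGraph_adj_inl_inr ha) .nil)))
    (.cons (incGraph_adj_inl_inr hxN) (.cons (incGraph_adj_inr_inl hbN)
      (.cons (incGraph_adj_inl_inr hb) .nil)))
    (by simp [hxa, hML]) (by simp [hxb, hNL]) (by simp)
  simp at this
  exact this.2

/-- A point collinear to no point of a line not containing it is special to at most one of its
points. -/
theorem IsGenHexagon.special_unique (hΓ : Γ.IsGenHexagon) (hx : x ∉ Γ.pts L)
    (hfar : ∀ c ∈ Γ.pts L, ¬ Γ.Collinear x c) (ha : a ∈ Γ.pts L) (hb : b ∈ Γ.pts L)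
    (hxa : Γ.Special x a) (hxb : Γ.Special x b) : a = b := by
  obtain ⟨z, K, M, hxz, hza, hxK, hzK, hzM, haM, hKM⟩ := hxa.exists_lines
  obtain ⟨w, K', M', hxw, hwb, hxK', hwK', hwM', hbM', hKM'⟩ := hxb.exists_lines
  have hKL : K ≠ L := by rintro rfl; exact hx hxK
  have hKL' : K' ≠ L := by rintro rfl; exact hx hxK'
  have hML : M ≠ L := by rintro rfl; exact hfar z hzM hxz
  have hML' : M' ≠ L := by rintro rfl; exact hfar w hwM' hxw
  have := hΓ.support_eq
    (.cons (incGraph_adj_inl_inr hxK) (.cons (incGraph_adj_inr_inl hzK)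
      (.cons (incGraph_adj_inl_inr hzM) (.cons (incGraph_adj_inr_inl haM)
        (.cons (incGraph_adj_inl_inr ha) .nil)))))
    (.cons (incGraph_adj_inl_inr hxK') (.cons (incGraph_adj_inr_inl hwK')
      (.cons (incGraph_adj_inl_inr hwM') (.cons (incGraph_adj_inr_inl hbM')
        (.cons (incGraph_adj_inl_inr hb) .nil)))))
    (by simp [hxz.1, hza.1, hxa.1, hKM, hKL, hML])
    (by simp [hxw.1, hwb.1, hxb.1, hKM', hKL', hML']) (by simp)
  simp at this
  exact this.2.2.2

/-- The ends of a path `x - p - q - y` of pairwise collinear points on three distinct lines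
are opposite. -/
theorem IsGenHexagon.opposite_of_path (hΓ : Γ.IsGenHexagon) (hx : x ∉ Γ.pts L)
    (hxp : Γ.Collinear x p) (hpq : p ≠ q) (hp : p ∈ Γ.pts L) (hq : q ∈ Γ.pts L)
    (hNL : N ≠ L) (hqN : q ∈ Γ.pts N) (hyN : y ∈ Γ.pts N) (hqy : q ≠ y) : Γ.Opposite y x := by
  have hyL : y ∉ Γ.pts L := fun h => hNL (hΓ.line_unique hqy hqN hyN hq h)
  have hxq : x ≠ q := by rintro rfl; exact hx hq
  have hpy : p ≠ y := by rintro rfl; exact hyL hp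
  have hxy : x ≠ y := by
    rintro rfl
    exact hpq (hΓ.collinear_unique hx hp hq hxp ⟨hxq, N, hyN, hqN⟩)
  obtain ⟨hxp, M, hxM, hpM⟩ := hxp
  have hML : M ≠ L := by rintro rfl; exact hx hxM
  have hMN : M ≠ N := by rintro rfl; exact hNL (hΓ.line_unique hpq hpM hqN hp hq)
  have hlong := fun w : Γ.incGraph.Walk (Sum.inl x) (Sum.inl y) => hΓ.support_eq
    (.cons (incGraph_adj_inl_inr hxM) (.cons (incGraph_adj_inr_inl hpM)
      (.cons (incGraph_adj_inl_inr hp) (.cons (incGraph_adj_inr_inl hq)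
        (.cons (incGraph_adj_inl_inr hqN) (.cons (incGraph_adj_inr_inl hyN) .nil))))))
    w (by simp [hxp, hxq, hxy, hpq, hpy, hqy, hML, hMN, hNL.symm])
  by_contra hopp
  rcases eq_or_collinear_or_special_of_not_opposite hopp with h | ⟨-, K, hyK, hxK⟩ | h
  · exact hxy h.symm
  · have := hlong (.cons (incGraph_adj_inl_inr hxK) (.cons (incGraph_adj_inr_inl hyK) .nil))
      (by simp [hxy]) (by simp)
    simp at this
  · obtain ⟨z, K, J, hyz, hzx, hyK, hzK, hzJ, hxJ, hKJ⟩ := h.exists_lines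
    have := hlong (.cons (incGraph_adj_inl_inr hxJ) (.cons (incGraph_adj_inr_inl hzJ)
      (.cons (incGraph_adj_inl_inr hzK) (.cons (incGraph_adj_inr_inl hyK) .nil))))
      (by simp [hxy, hzx.1.symm, hyz.1.symm, hKJ.symm]) (by simp)
    simp at this

/-- In a thick generalised hexagon, every point off a line is opposite some point that is on,
or collinear to a point of, that line. -/
theorem IsGenHexagon.exists_opposite_near_line (hΓ : Γ.IsGenHexagon) (hth : Γ.Thick)
    (hx : x ∉ Γ.pts L) :
    ∃ q N y, q ∈ Γ.pts L ∧ q ∈ Γ.pts N ∧ y ∈ Γ.pts N ∧ Γ.Opposite y x := by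
  have exists_ne_of_three_le : ∀ {α : Type} {s : Set α}, 3 ≤ s.encard → ∀ a, ∃ b ∈ s, b ≠ a :=
    fun hs => Set.Nontrivial.exists_ne
      (Set.one_lt_encard_iff_nontrivial.1 (lt_of_lt_of_le (by norm_num) hs))
  by_cases hfar : ∀ c ∈ Γ.pts L, ¬ Γ.Collinear x c
  · obtain ⟨a, ha, -⟩ := exists_ne_of_three_le (hth.1 L) x
    obtain ⟨b, hb, hba⟩ := exists_ne_of_three_le (hth.1 L) a
    by_contra! hno
    have special_of_mem : ∀ c ∈ Γ.pts L, Γ.Special x c := by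
      intro c hc
      rcases eq_or_collinear_or_special_of_not_opposite (hno c L c hc hc hc) with h | h | h
      · exact absurd (h ▸ hc) hx
      · exact absurd h.symm (hfar c hc)
      · exact ⟨h.1.symm, hfar c hc, h.2.2.imp fun _ hz => hz.symm⟩
    exact hba (hΓ.special_unique hx hfar hb ha (special_of_mem b hb) (special_of_mem a ha))
  · push Not at hfar
    obtain ⟨p, hp, hxp⟩ := hfar
    obtain ⟨q, hq, hqp⟩ := exists_ne_of_three_le (hth.1 L) p
    obtain ⟨N, hqN, hNL⟩ := exists_ne_of_three_le (hth.2 q) L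
    obtain ⟨y, hyN, hyq⟩ := exists_ne_of_three_le (hth.1 N) q
    exact ⟨q, N, y, hq, hqN, hyN,
      hΓ.opposite_of_path hx hxp hqp.symm hp hq hNL hqN hyN hyq.symm⟩

end GenHexagon

/-- A round-up triple of points of a thick generalised hexagon with `x₁` and `x₂`
collinear is contained in a common line. -/
theorem roundUpTriple_collinear (Γ : GenHexagon) (hΓ : Γ.IsGenHexagon) (hth : Γ.Thick)
    (x₁ x₂ x₃ : Γ.Point) (hrut : Γ.RoundUpTriple x₁ x₂ x₃)
    (hcol : Γ.Collinear x₁ x₂) :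
    ∃ L, x₁ ∈ Γ.pts L ∧ x₂ ∈ Γ.pts L ∧ x₃ ∈ Γ.pts L := by
  obtain ⟨-, L, h₁, h₂⟩ := hcol
  refine ⟨L, h₁, h₂, ?_⟩
  by_contra h₃
  obtain ⟨q, N, y, hqL, hqN, hyN, hopp⟩ := hΓ.exists_opposite_near_line hth h₃
  exact hrut y (.inr (.inr ⟨GenHexagon.not_opposite_of_mem hqL h₁ hqN hyN,
    GenHexagon.not_opposite_of_mem hqL h₂ hqN hyN, hopp⟩))
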